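/- For every register set automaton A there exist a transfer Petri net N and a marking M_F of N such that L(A) ≠ ∅ if and only if M_F is coverable in N. -/

import Mathlib

/-- A data word over alphabet `Sigma`, with data domain `𝔻 = ℕ`. -/
abbrev DataWord (Sigma : Type) : Type :=
  List (Sigma × ℕ)
/-- A transition `(src, letter, gIn, gNin, upd, tgt)` of a register set automaton.
In the update, `none` stands for the current input value `in`, and `some r`
for register `r`. -/
structure RsATrans (Sigma : Type) where
  src : ℕ
  letter : Sigma
  gIn : Finset ℕ
  gNin : Finset ℕ
  upd : ℕ → Finset (Option ℕ)
  tgt : ℕ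

/-- The register assignment obtained after taking transition `t` with current input
data value `d`, starting from the assignment `f`: each register gets the union of
the contents of the registers in its update set, together with `{d}` if the update
set contains `in`. -/
def RsATrans.apply {Sigma : Type} (t : RsATrans Sigma) (f : ℕ → Finset ℕ) (d : ℕ) :
    ℕ → Finset ℕ := fun r =>
  (t.upd r).biUnion fun o =>
    match o with
    | none => {d}
    | some r' => f r'

/-- A register set automaton (RsA); states and registers are drawn from `ℕ`. -/
structure RsA (Sigma : Type) where
  Q : Finset ℕ
  R : Finset ℕ
  Δ : Set (RsATrans Sigma)
  I : Finset ℕ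
  F : Finset ℕ
  finite_trans : Δ.Finite
  I_sub : I ⊆ Q
  F_sub : F ⊆ Q
  wf : ∀ t ∈ Δ, t.src ∈ Q ∧ t.tgt ∈ Q ∧ t.gIn ⊆ R ∧ t.gNin ⊆ R ∧
    Disjoint t.gIn t.gNin ∧ ∀ r ∈ R, ∀ r' : ℕ, some r' ∈ t.upd r → r' ∈ R

/-- One step of an RsA from configuration `c` to configuration `c'`, reading
the letter `x`. -/
def RsA.Step {Sigma : Type} (A : RsA Sigma) (c : ℕ × (ℕ → Finset ℕ)) (x : Sigma × ℕ)
    (c' : ℕ × (ℕ → Finset ℕ)) : Prop :=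
  ∃ t ∈ A.Δ, t.src = c.1 ∧ t.letter = x.1 ∧
    (∀ r ∈ t.gIn, x.2 ∈ c.2 r) ∧ (∀ r ∈ t.gNin, x.2 ∉ c.2 r) ∧
    c' = (t.tgt, t.apply c.2 x.2)

/-- `A.Run c w c'` holds iff `A` can read the data word `w` going from
configuration `c` to configuration `c'`. -/
inductive RsA.Run {Sigma : Type} (A : RsA Sigma) :
    (ℕ × (ℕ → Finset ℕ)) → DataWord Sigma → (ℕ × (ℕ → Finset ℕ)) → Prop where
  | nil (c : ℕ × (ℕ → Finset ℕ)) : RsA.Run A c [] c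
  | cons {c c' c'' : ℕ × (ℕ → Finset ℕ)} {x : Sigma × ℕ} {w : DataWord Sigma} :
      A.Step c x c' → RsA.Run A c' w c'' → RsA.Run A c (x :: w) c''

/-- The language of an RsA: words on which there exists an accepting run
starting from some initial state with all registers empty. -/
def RsA.Lang {Sigma : Type} (A : RsA Sigma) : Set (DataWord Sigma) :=
  { w | ∃ q₀ ∈ A.I, ∃ c : ℕ × (ℕ → Finset ℕ),
      A.Run (q₀, fun _ => ∅) w c ∧ c.1 ∈ A.F }
/-- A transition of a transfer Petri net: input and output multiplicities and
the transfer function. Places are drawn from `ℕ`. -/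
structure TPNTrans where
  inp : ℕ → ℕ
  out : ℕ → ℕ
  transfer : ℕ → ℕ

/-- A transfer Petri net (TPN); places are drawn from `ℕ`, markings are functions
`ℕ → ℕ` (only the values on `P` matter). -/
structure TPN where
  P : Finset ℕ
  T : Set TPNTrans
  M0 : ℕ → ℕ
  finite_T : T.Finite
  wf : ∀ t ∈ T, ∀ p ∈ P, t.transfer p ∈ P

/-- A TPN transition is enabled in a marking iff every place holds enough tokens. -/
def TPN.Enabled (N : TPN) (t : TPNTrans) (M : ℕ → ℕ) : Prop :=
  ∀ p ∈ N.P, t.inp p ≤ M p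

/-- Firing a TPN transition: remove the input tokens, transfer the remaining tokens
along the transfer function, and add the output tokens. -/
def TPN.fire (N : TPN) (t : TPNTrans) (M : ℕ → ℕ) : ℕ → ℕ := fun p =>
  t.out p + ∑ p' ∈ N.P.filter (fun p' => t.transfer p' = p), (M p' - t.inp p')

/-- The reachable markings of a TPN. -/
inductive TPN.Reachable (N : TPN) : (ℕ → ℕ) → Prop where
  | init : TPN.Reachable N N.M0
  | step {M : ℕ → ℕ} {t : TPNTrans} : TPN.Reachable N M → t ∈ N.T →
      N.Enabled t M → TPN.Reachable N (N.fire t M)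

/-- A marking `M` is coverable iff some reachable marking dominates it on all places. -/
def TPN.Coverable (N : TPN) (M : ℕ → ℕ) : Prop :=
  ∃ M', N.Reachable M' ∧ ∀ p ∈ N.P, M p ≤ M' p

/-! A configuration of the automaton is abstracted by counting, for each set `S` of registers, the
data values lying in exactly the registers of `S`. Reading a value moves the values of any given
region, except the one read, to one common region: this is a transfer. Values in no register need
not be counted, since a fresh one is always available; the place of the empty region therefore only
collects discarded tokens, and no transition consumes from it. With this convention the net is
bisimilar to the automaton extended by a start and an accept control point. -/

open Encodable Finset Relation

section EncodableNets

variable {π : Type*} [Encodable π]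

/-- A transition of a transfer Petri net whose places come from an encodable type `π`, given as a
transition on the codes of the places. -/
noncomputable def TPNTrans.ofEncodable (inp out : π → ℕ) (transfer : π → π) : TPNTrans where
  inp := Function.extend encode inp 0
  out := Function.extend encode out 0
  transfer := Function.extend encode (encode ∘ transfer) id

variable {N : TPN} {P : Finset π}

theorem TPN.enabled_ofEncodable_iff (hP : N.P = P.map (encode' π)) {inp out : π → ℕ}
    {transfer : π → π} {M : ℕ → ℕ} :
    N.Enabled (.ofEncodable inp out transfer) M ↔ ∀ p ∈ P, inp p ≤ M (encode p) := by
  simp [TPN.Enabled, TPNTrans.ofEncodable, hP, encode', encode_injective.extend_apply]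

theorem TPN.fire_ofEncodable (hP : N.P = P.map (encode' π)) [DecidableEq π] (inp out : π → ℕ)
    (transfer : π → π) (M : ℕ → ℕ) (p : π) :
    N.fire (.ofEncodable inp out transfer) M (encode p) =
      out p + ∑ p' ∈ P with transfer p' = p, (M (encode p') - inp p') := by
  simp [TPN.fire, TPNTrans.ofEncodable, hP, filter_map, encode', encode_injective.extend_apply,
    Function.comp_def]

theorem TPNTrans.transfer_ofEncodable_mem {inp out : π → ℕ} {transfer : π → π}
    (h : ∀ p ∈ P, transfer p ∈ P) :
    ∀ n ∈ P.map (encode' π), (ofEncodable inp out transfer).transfer n ∈ P.map (encode' π) := by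
  simpa [ofEncodable, encode', encode_injective.extend_apply] using h

end EncodableNets

namespace RsA

section Regions

/-- The region of a data value: the registers of `R` that contain it. -/
def region (R : Finset ℕ) (f : ℕ → Finset ℕ) (d : ℕ) : Finset ℕ := {r ∈ R | d ∈ f r}

/-- The data values of region `S`. Values in no register are left out, so that the set is finite;
it is thus complete only for nonempty `S`. -/
def values (R : Finset ℕ) (f : ℕ → Finset ℕ) (S : Finset ℕ) : Finset ℕ :=
  {d ∈ R.biUnion f | region R f d = S}

variable {R S G : Finset ℕ} {f : ℕ → Finset ℕ} {d : ℕ}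

theorem mem_region {r : ℕ} : r ∈ region R f d ↔ r ∈ R ∧ d ∈ f r := mem_filter

theorem region_subset : region R f d ⊆ R := filter_subset _ _

theorem subset_region_iff (hG : G ⊆ R) : G ⊆ region R f d ↔ ∀ r ∈ G, d ∈ f r :=
  forall₂_congr fun _ hr => mem_region.trans (and_iff_right (hG hr))

theorem disjoint_region_iff (hG : G ⊆ R) : Disjoint G (region R f d) ↔ ∀ r ∈ G, d ∉ f r :=
  disjoint_left.trans <|
    forall₂_congr fun _ hr => not_congr (mem_region.trans (and_iff_right (hG hr)))

theorem mem_values (hS : S.Nonempty) : d ∈ values R f S ↔ region R f d = S := by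
  refine mem_filter.trans (and_iff_right_of_imp ?_)
  rintro rfl
  obtain ⟨r, hr⟩ := hS
  exact mem_biUnion.2 ⟨r, mem_region.1 hr⟩

theorem exists_region_eq_empty (R : Finset ℕ) (f : ℕ → Finset ℕ) : ∃ d, region R f d = ∅ := by
  obtain ⟨d, hd⟩ := Infinite.exists_notMem_finset (R.biUnion f)
  exact ⟨d, filter_eq_empty_iff.2 fun r hr hdr => hd (mem_biUnion.2 ⟨r, hr, hdr⟩)⟩

theorem card_values_eq_add (d : ℕ) (hS : S.Nonempty) :
    #(values R f S) = (if S = region R f d then 1 else 0) + #((values R f S).erase d) := by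
  split_ifs with h
  · rw [add_comm, card_erase_add_one ((mem_values hS).2 h.symm)]
  · rw [erase_eq_of_notMem fun hd => h ((mem_values hS).1 hd).symm, zero_add]

section Transfer

variable {f' : ℕ → Finset ℕ} {g : Finset ℕ → Finset ℕ}

theorem filter_erase_values (hf' : ∀ e ≠ d, region R f' e = g (region R f e)) (hS : S.Nonempty)
    (hgS : (g S).Nonempty) :
    {e ∈ (values R f' (g S)).erase d | region R f e = S} = (values R f S).erase d := by
  ext e
  simp only [mem_filter, mem_erase, mem_values hS, mem_values hgS]
  constructor
  · rintro ⟨⟨hed, -⟩, he⟩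
    exact ⟨hed, he⟩
  · rintro ⟨hed, rfl⟩
    exact ⟨⟨hed, hf' e hed⟩, rfl⟩

theorem card_values_of_forall_ne {S' : Finset ℕ} (hg : g ∅ = ∅)
    (hf' : ∀ e ≠ d, region R f' e = g (region R f e)) (hS' : S'.Nonempty) :
    #(values R f' S') = (if S' = region R f' d then 1 else 0) +
      ∑ S ∈ R.powerset with g S = S', (#(values R f S) - if S = region R f d then 1 else 0) := by
  have hmaps : ∀ e ∈ (values R f' S').erase d, region R f e ∈ {S ∈ R.powerset | g S = S'} := by
    intro e he
    obtain ⟨hed, he⟩ := mem_erase.1 he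
    rw [mem_values hS', hf' e hed] at he
    exact mem_filter.2 ⟨mem_powerset.2 region_subset, he⟩
  rw [card_values_eq_add d hS', card_eq_sum_card_fiberwise hmaps]
  congr 1
  refine sum_congr rfl fun S hS => ?_
  obtain rfl := (mem_filter.1 hS).2
  have hne : S.Nonempty :=
    nonempty_iff_ne_empty.2 fun hempty => hS'.ne_empty (by rw [hempty, hg])
  rw [filter_erase_values hf' hne hS', card_values_eq_add d hne, Nat.add_sub_cancel_left]

end Transfer

end Regions

end RsA

namespace RsATrans

variable {Sigma : Type} {t : RsATrans Sigma} {R : Finset ℕ} {f : ℕ → Finset ℕ} {d e : ℕ}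

/-- The registers of `R` updated from a register of `S`: the region to which `t` moves the values
of region `S` other than the input value. -/
def regionMap (t : RsATrans Sigma) (R S : Finset ℕ) : Finset ℕ :=
  {r ∈ R | ∃ r' ∈ S, some r' ∈ t.upd r}

/-- The registers of `R` into which `t` stores the input value. -/
def inputRegion (t : RsATrans Sigma) (R : Finset ℕ) : Finset ℕ := {r ∈ R | none ∈ t.upd r}

theorem regionMap_subset {S : Finset ℕ} : t.regionMap R S ⊆ R := filter_subset _ _

theorem regionMap_empty : t.regionMap R ∅ = ∅ := by simp [regionMap]

theorem mem_apply {r : ℕ} :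
    e ∈ t.apply f d r ↔ (none ∈ t.upd r ∧ e = d) ∨ ∃ r', some r' ∈ t.upd r ∧ e ∈ f r' := by
  simp [apply, Option.exists]

theorem region_apply_of_ne (ht : ∀ r ∈ R, ∀ r', some r' ∈ t.upd r → r' ∈ R) (he : e ≠ d) :
    RsA.region R (t.apply f d) e = t.regionMap R (RsA.region R f e) := by
  ext r
  simp only [RsA.mem_region, mem_apply, regionMap, mem_filter, he]
  grind

theorem region_apply_self (ht : ∀ r ∈ R, ∀ r', some r' ∈ t.upd r → r' ∈ R) :
    RsA.region R (t.apply f d) d =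
      t.regionMap R (RsA.region R f d) ∪ t.inputRegion R := by
  ext r
  simp only [RsA.mem_region, mem_apply, regionMap, inputRegion, mem_union, mem_filter]
  grind

end RsATrans

namespace RsA

/-- The control points of the net: the automaton states, a starting point from which an initial
state is chosen, and a point reached from the final states. -/
inductive Control
  | start
  | state (q : ℕ)
  | accept
  deriving DecidableEq

noncomputable instance : Encodable Control :=
  .ofInj (β := Option (Option ℕ))
    (fun
      | .start => none
      | .accept => some none
      | .state q => some (some q))
    (by rintro ⟨⟩ ⟨⟩ h <;> simp_all)

/-- The places of the net, before encoding: regions and control points. -/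
abbrev Place : Type := Finset ℕ ⊕ Control

/-- One token on control point `k` and one on region `S`, the empty region being exempt because the
values it contains are not counted. -/
def tokens (k : Control) (S : Finset ℕ) : Place → ℕ
  | .inl S' => if S' = S ∧ S'.Nonempty then 1 else 0
  | .inr k' => if k' = k then 1 else 0

/-- The net transition that moves control from `k` to `k'` and one data value from region `S` to
region `S'`, and all other data values along `g`. -/
noncomputable def moveTrans (k : Control) (S : Finset ℕ) (k' : Control) (S' : Finset ℕ)
    (g : Finset ℕ → Finset ℕ) : TPNTrans :=
  .ofEncodable (tokens k S) (tokens k' S') (Sum.map g id)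

/-- The net transition that moves control from `k` to `k'` and leaves the data unchanged. -/
noncomputable def silentTrans (k k' : Control) : TPNTrans := moveTrans k ∅ k' ∅ id

variable {Sigma : Type}

/-- The net transition that simulates `t` on an input value of region `S`. -/
noncomputable def readTrans (R : Finset ℕ) (t : RsATrans Sigma) (S : Finset ℕ) : TPNTrans :=
  moveTrans (.state t.src) S (.state t.tgt) (t.regionMap R S ∪ t.inputRegion R) (t.regionMap R)

/-- The control points of the net of `A`. -/
def controls (A : RsA Sigma) : Finset Control := insert .start (insert .accept (A.Q.image .state))

theorem start_mem_controls {A : RsA Sigma} : .start ∈ A.controls := by simp [controls]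

theorem accept_mem_controls {A : RsA Sigma} : .accept ∈ A.controls := by simp [controls]

theorem state_mem_controls {A : RsA Sigma} {q : ℕ} (hq : q ∈ A.Q) : .state q ∈ A.controls := by
  simp [controls, hq]

/-- The places of the net of `A`, before encoding. -/
def places (A : RsA Sigma) : Finset Place := A.R.powerset.disjSum A.controls

/-- The transitions of the net of `A`. -/
def netTrans (A : RsA Sigma) : Set TPNTrans :=
  (fun q => silentTrans .start (.state q)) '' A.I ∪
  (fun q => silentTrans (.state q) .accept) '' A.F ∪
  {x | ∃ t ∈ A.Δ, ∃ S ⊆ A.R, t.gIn ⊆ S ∧ Disjoint t.gNin S ∧ x = readTrans A.R t S}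

theorem finite_netTrans (A : RsA Sigma) : A.netTrans.Finite := by
  refine ((A.I.finite_toSet.image _).union (A.F.finite_toSet.image _)).union ?_
  refine (A.finite_trans.image2 (readTrans A.R) A.R.powerset.finite_toSet).subset ?_
  rintro _ ⟨t, ht, S, hS, -, -, rfl⟩
  exact ⟨t, ht, S, by simpa using hS, rfl⟩

theorem transfer_moveTrans_mem (A : RsA Sigma) {k k' : Control} {S S' : Finset ℕ}
    {g : Finset ℕ → Finset ℕ} (hg : ∀ T ⊆ A.R, g T ⊆ A.R) :
    ∀ n ∈ A.places.map (encode' Place),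
      (moveTrans k S k' S' g).transfer n ∈ A.places.map (encode' Place) := by
  refine TPNTrans.transfer_ofEncodable_mem ?_
  rintro (T | c) hp
  · simpa [places] using hg T (by simpa [places] using hp)
  · simpa [places] using hp

/-- The transfer Petri net simulating `A`. -/
noncomputable def toTPN (A : RsA Sigma) : TPN where
  P := A.places.map (encode' Place)
  T := A.netTrans
  M0 := Function.extend encode (tokens .start ∅) 0
  finite_T := A.finite_netTrans
  wf := by
    rintro _ ((⟨q, -, rfl⟩ | ⟨q, -, rfl⟩) | ⟨t, -, S, -, -, -, rfl⟩)
    · exact A.transfer_moveTrans_mem fun _ => id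
    · exact A.transfer_moveTrans_mem fun _ => id
    · exact A.transfer_moveTrans_mem fun _ _ => t.regionMap_subset

/-- The marking with a single token, on the accepting control point. -/
noncomputable def acceptMarking : ℕ → ℕ := Function.extend encode (tokens .accept ∅) 0

section ControlSteps

/-- The steps of `A` extended by a start and an accept control point. -/
inductive ControlStep (A : RsA Sigma) :
    Control × (ℕ → Finset ℕ) → Control × (ℕ → Finset ℕ) → Prop
  | init {q : ℕ} (f : ℕ → Finset ℕ) : q ∈ A.I → ControlStep A (.start, f) (.state q, f)
  | read {c c' : ℕ × (ℕ → Finset ℕ)} {x : Sigma × ℕ} :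
      A.Step c x c' → ControlStep A (.state c.1, c.2) (.state c'.1, c'.2)
  | accept {q : ℕ} (f : ℕ → Finset ℕ) : q ∈ A.F → ControlStep A (.state q, f) (.accept, f)

variable {A : RsA Sigma}

theorem Run.reflTransGen_controlStep {c c' : ℕ × (ℕ → Finset ℕ)} {w : DataWord Sigma}
    (h : A.Run c w c') :
    ReflTransGen A.ControlStep (.state c.1, c.2) (.state c'.1, c'.2) := by
  induction h with
  | nil => exact .refl
  | cons hs _ ih => exact .head (.read hs) ih

theorem exists_run_of_reflTransGen {c : ℕ × (ℕ → Finset ℕ)} {g : ℕ → Finset ℕ}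
    (h : ReflTransGen A.ControlStep (.state c.1, c.2) (.accept, g)) :
    ∃ w c', A.Run c w c' ∧ c'.1 ∈ A.F := by
  generalize hx : ((.state c.1, c.2) : Control × (ℕ → Finset ℕ)) = x at h
  induction h using ReflTransGen.head_induction_on generalizing c with
  | refl => simp at hx
  | head hs _ ih =>
    cases hs with
    | init => simp at hx
    | @read c₁ c' x hs =>
      obtain rfl : c = c₁ := by simpa [Prod.ext_iff] using hx
      obtain ⟨w, c'', hrun, hF⟩ := ih rfl
      exact ⟨_, c'', .cons hs hrun, hF⟩
    | accept f hF =>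
      simp only [Prod.mk.injEq, Control.state.injEq] at hx
      exact ⟨[], c, .nil c, hx.1 ▸ hF⟩

theorem lang_nonempty_iff_reflTransGen :
    A.Lang.Nonempty ↔ ∃ g, ReflTransGen A.ControlStep (.start, fun _ => ∅) (.accept, g) := by
  constructor
  · rintro ⟨w, q, hq, c, hrun, hF⟩
    exact ⟨c.2, .head (.init _ hq) (.tail hrun.reflTransGen_controlStep (.accept _ hF))⟩
  · rintro ⟨g, h⟩
    obtain h | ⟨_, hs, h⟩ := h.cases_head
    · simp at h
    · cases hs with
      | @init q _ hq =>
        obtain ⟨w, c, hrun, hF⟩ := exists_run_of_reflTransGen (c := (q, _)) h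
        exact ⟨w, q, hq, c, hrun, hF⟩

end ControlSteps

section Simulation

/-- The marking `M` represents control point `k` and register assignment `f`. The tokens on the
empty region are unconstrained. -/
structure Represents (R : Finset ℕ) (M : ℕ → ℕ) (k : Control) (f : ℕ → Finset ℕ) : Prop where
  control_eq (k' : Control) : M (encode (Sum.inr k' : Place)) = if k' = k then 1 else 0
  region_eq (S : Finset ℕ) (hS : S.Nonempty) : M (encode (Sum.inl S : Place)) = #(values R f S)

variable {A : RsA Sigma} {R : Finset ℕ} {M : ℕ → ℕ} {k : Control} {f : ℕ → Finset ℕ}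

theorem represents_M0 (A : RsA Sigma) : Represents A.R A.toTPN.M0 .start fun _ => ∅ where
  control_eq k' := encode_injective.extend_apply ..
  region_eq S hS := by
    refine (encode_injective.extend_apply ..).trans ?_
    simp [tokens, values, region, hS.ne_empty, hS.ne_empty.symm]

theorem Represents.tokens_region_le (h : Represents R M k f) (d : ℕ) (p : Place) :
    tokens k (region R f d) p ≤ M (encode p) := by
  rcases p with S | k'
  · by_cases hS : S = region R f d ∧ S.Nonempty
    · rw [tokens, if_pos hS, h.region_eq S hS.2]
      exact card_pos.2 ⟨d, (mem_values hS.2).2 hS.1.symm⟩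
    · simp [tokens, hS]
  · rw [h.control_eq, tokens]

theorem Represents.eq_of_tokens_le (h : Represents R M k f) {k' : Control} {S : Finset ℕ}
    (hle : tokens k' S (.inr k') ≤ M (encode (Sum.inr k' : Place))) : k' = k := by
  by_contra hne
  rw [h.control_eq, if_neg hne, tokens, if_pos rfl] at hle
  exact Nat.not_succ_le_zero 0 hle

theorem Represents.enabled_moveTrans_iff (h : Represents A.R M k f) {k₁ k₂ : Control}
    {S₁ S₂ : Finset ℕ} {g : Finset ℕ → Finset ℕ} (hk₁ : k₁ ∈ A.controls) (hS₁ : S₁ ⊆ A.R) :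
    A.toTPN.Enabled (moveTrans k₁ S₁ k₂ S₂ g) M ↔ k₁ = k ∧ ∃ d, region A.R f d = S₁ := by
  rw [moveTrans, TPN.enabled_ofEncodable_iff (P := A.places) rfl]
  constructor
  · intro hle
    refine ⟨h.eq_of_tokens_le (hle (.inr k₁) (inr_mem_disjSum.2 hk₁)), ?_⟩
    obtain rfl | hne := S₁.eq_empty_or_nonempty
    · exact exists_region_eq_empty A.R f
    · have hreg := hle (.inl S₁) (inl_mem_disjSum.2 (mem_powerset.2 hS₁))
      rw [h.region_eq S₁ hne, tokens, if_pos ⟨rfl, hne⟩] at hreg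
      obtain ⟨d, hd⟩ := card_pos.1 hreg
      exact ⟨d, (mem_values hne).1 hd⟩
  · rintro ⟨rfl, d, rfl⟩ p -
    exact h.tokens_region_le d p

theorem Represents.enabled_silentTrans_iff (h : Represents A.R M k f) {k₁ k₂ : Control}
    (hk₁ : k₁ ∈ A.controls) : A.toTPN.Enabled (silentTrans k₁ k₂) M ↔ k₁ = k :=
  (h.enabled_moveTrans_iff hk₁ (empty_subset _)).trans
    (and_iff_left (exists_region_eq_empty A.R f))

theorem Represents.fire_moveTrans (h : Represents A.R M k f) (k' : Control) {d : ℕ}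
    {f' : ℕ → Finset ℕ} {g : Finset ℕ → Finset ℕ} (hg : g ∅ = ∅)
    (hf' : ∀ e ≠ d, region A.R f' e = g (region A.R f e)) :
    Represents A.R (A.toTPN.fire
      (moveTrans k (region A.R f d) k' (region A.R f' d) g) M) k' f' where
  control_eq k₁ := by
    rw [moveTrans, TPN.fire_ofEncodable (P := A.places) rfl, tokens, Nat.add_eq_left]
    refine sum_eq_zero ?_
    rintro (S | k₂) hp
    · simp at hp
    · rw [h.control_eq, tokens, Nat.sub_self]
  region_eq S' hS' := by
    rw [moveTrans, TPN.fire_ofEncodable (P := A.places) rfl, card_values_of_forall_ne hg hf' hS',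
      sum_filter, places, sum_disjSum, sum_filter]
    simp only [tokens, hS', and_true, Sum.map_inl, Sum.map_inr, Sum.inl.injEq, reduceCtorEq,
      if_false, sum_const_zero, add_zero]
    congr 1
    refine sum_congr rfl fun S _ => ite_congr rfl (fun hS => ?_) fun _ => rfl
    have hne : S.Nonempty :=
      nonempty_iff_ne_empty.2 fun hempty => hS'.ne_empty (by rw [← hS, hempty, hg])
    simp only [h.region_eq S hne, hne, and_true]

theorem Represents.fire_silentTrans (h : Represents A.R M k f) (k' : Control) :
    Represents A.R (A.toTPN.fire (silentTrans k k') M) k' f := by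
  obtain ⟨d, hd⟩ := exists_region_eq_empty A.R f
  simpa only [silentTrans, hd] using h.fire_moveTrans k' (d := d) (g := id) rfl fun _ _ => rfl

theorem Represents.fire_readTrans {t : RsATrans Sigma} (h : Represents A.R M (.state t.src) f)
    (ht : t ∈ A.Δ) (d : ℕ) :
    Represents A.R (A.toTPN.fire (readTrans A.R t (region A.R f d)) M) (.state t.tgt)
      (t.apply f d) := by
  obtain ⟨-, -, -, -, -, hup⟩ := A.wf t ht
  rw [readTrans, ← RsATrans.region_apply_self hup]
  exact h.fire_moveTrans _ t.regionMap_empty fun _ => t.region_apply_of_ne hup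

theorem Represents.exists_fire_of_controlStep (h : Represents A.R M k f) {k' : Control}
    {f' : ℕ → Finset ℕ} (hs : A.ControlStep (k, f) (k', f')) :
    ∃ x ∈ A.toTPN.T, A.toTPN.Enabled x M ∧ Represents A.R (A.toTPN.fire x M) k' f' := by
  cases hs with
  | @init q _ hq =>
    exact ⟨_, .inl (.inl ⟨q, hq, rfl⟩), (h.enabled_silentTrans_iff start_mem_controls).2 rfl,
      h.fire_silentTrans _⟩
  | @accept q _ hq =>
    exact ⟨_, .inl (.inr ⟨q, hq, rfl⟩),
      (h.enabled_silentTrans_iff (state_mem_controls (A.F_sub hq))).2 rfl, h.fire_silentTrans _⟩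
  | @read c _ x hs =>
    obtain ⟨t, ht, hsrc, -, hIn, hNin, rfl⟩ := hs
    obtain ⟨hQ, -, hInR, hNinR, -, -⟩ := A.wf t ht
    rw [← hsrc] at h
    exact ⟨_, .inr ⟨t, ht, _, region_subset, (subset_region_iff hInR).2 hIn,
      (disjoint_region_iff hNinR).2 hNin, rfl⟩,
      (h.enabled_moveTrans_iff (state_mem_controls hQ) region_subset).2 ⟨rfl, x.2, rfl⟩,
      h.fire_readTrans ht x.2⟩

theorem Represents.exists_controlStep_of_enabled (h : Represents A.R M k f) {x : TPNTrans}
    (hx : x ∈ A.toTPN.T) (hen : A.toTPN.Enabled x M) :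
    ∃ c, A.ControlStep (k, f) c ∧ Represents A.R (A.toTPN.fire x M) c.1 c.2 := by
  rcases hx with (⟨q, hq, rfl⟩ | ⟨q, hq, rfl⟩) | ⟨t, ht, S, hS, hIn, hNin, rfl⟩
  · obtain rfl := (h.enabled_silentTrans_iff start_mem_controls).1 hen
    exact ⟨_, .init f hq, h.fire_silentTrans _⟩
  · obtain rfl := (h.enabled_silentTrans_iff (state_mem_controls (A.F_sub hq))).1 hen
    exact ⟨_, .accept f hq, h.fire_silentTrans _⟩
  · obtain ⟨hQ, -, hInR, hNinR, -, -⟩ := A.wf t ht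
    obtain ⟨rfl, d, rfl⟩ := (h.enabled_moveTrans_iff (state_mem_controls hQ) hS).1 hen
    exact ⟨_, .read (c := (t.src, f)) (x := (t.letter, d))
      ⟨t, ht, rfl, rfl, (subset_region_iff hInR).1 hIn, (disjoint_region_iff hNinR).1 hNin, rfl⟩,
      h.fire_readTrans ht d⟩

theorem exists_reachable_of_reflTransGen {c : Control × (ℕ → Finset ℕ)}
    (h : ReflTransGen A.ControlStep (.start, fun _ => ∅) c) :
    ∃ M, A.toTPN.Reachable M ∧ Represents A.R M c.1 c.2 := by
  induction h with
  | refl => exact ⟨_, .init, represents_M0 A⟩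
  | tail _ hs ih =>
    obtain ⟨M, hM, hrep⟩ := ih
    obtain ⟨x, hx, hen, hrep'⟩ := hrep.exists_fire_of_controlStep hs
    exact ⟨_, .step hM hx hen, hrep'⟩

theorem exists_reflTransGen_of_reachable (hM : A.toTPN.Reachable M) :
    ∃ c, ReflTransGen A.ControlStep (.start, fun _ => ∅) c ∧ Represents A.R M c.1 c.2 := by
  induction hM with
  | init => exact ⟨_, .refl, represents_M0 A⟩
  | step _ hx hen ih =>
    obtain ⟨c, hc, hrep⟩ := ih
    obtain ⟨c', hs, hrep'⟩ := hrep.exists_controlStep_of_enabled hx hen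
    exact ⟨c', hc.tail hs, hrep'⟩

theorem Represents.acceptMarking_le_iff (h : Represents A.R M k f) :
    (∀ n ∈ A.toTPN.P, acceptMarking n ≤ M n) ↔ k = .accept := by
  simp only [toTPN, mem_map, forall_exists_index, and_imp, forall_apply_eq_imp_iff₂, encode',
    Function.Embedding.coeFn_mk, acceptMarking, encode_injective.extend_apply]
  constructor
  · intro hle
    exact (h.eq_of_tokens_le (hle (.inr .accept) (inr_mem_disjSum.2 accept_mem_controls))).symm
  · rintro rfl p -
    obtain ⟨d, hd⟩ := exists_region_eq_empty A.R f
    exact hd ▸ h.tokens_region_le d p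

theorem coverable_acceptMarking_iff :
    A.toTPN.Coverable acceptMarking ↔
      ∃ g, ReflTransGen A.ControlStep (.start, fun _ => ∅) (.accept, g) := by
  constructor
  · rintro ⟨M, hM, hle⟩
    obtain ⟨⟨k, g⟩, hc, hrep⟩ := exists_reflTransGen_of_reachable hM
    obtain rfl := hrep.acceptMarking_le_iff.1 hle
    exact ⟨g, hc⟩
  · rintro ⟨g, h⟩
    obtain ⟨M, hM, hrep⟩ := exists_reachable_of_reflTransGen h
    exact ⟨M, hM, hrep.acceptMarking_le_iff.2 rfl⟩

end Simulation

end RsA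

theorem rsa_emptiness_to_tpn_coverability_general {Sigma : Type} (A : RsA Sigma) :
    RsA.Lang A ≠ ∅ ↔ A.toTPN.Coverable RsA.acceptMarking := by
  rw [← Set.nonempty_iff_ne_empty, RsA.lang_nonempty_iff_reflTransGen,
    RsA.coverable_acceptMarking_iff]

/-- For every RsA `A` there are a transfer Petri net `N` and a
marking `M_F` such that `L(A) ≠ ∅` iff `M_F` is coverable in `N`. -/
theorem rsa_emptiness_to_tpn_coverability (Sigma : Type) [Fintype Sigma]
    [Nonempty Sigma] (A : RsA Sigma) :
    ∃ (N : TPN) (MF : ℕ → ℕ), RsA.Lang A ≠ ∅ ↔ N.Coverable MF :=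
  ⟨A.toTPN, RsA.acceptMarking, rsa_emptiness_to_tpn_coverability_general A⟩
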